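/- Let (M,g) be a Riemannian manifold, p ∈ M, and suppose normal coordinates x are chosen at p = 0 in a coordinate ball B. Then for A > 0 sufficiently large, the function φ(x) = log|x| + A|x| has the property that its composition with any smooth conformal harmonic immersion u : 𝔻 → B is subharmonic on 𝔻 (i.e. φ is minimal plurisubharmonic near the origin). -/

import Mathlib

open Metric Set Real

noncomputable section

variable {n : ℕ}

/-- Partial derivative in the `k`-th coordinate direction. -/
def pd (f : EuclideanSpace ℝ (Fin n) → ℝ) (x : EuclideanSpace ℝ (Fin n)) (k : Fin n) : ℝ :=
  fderiv ℝ f x (EuclideanSpace.single k 1)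

/-- Christoffel symbols `Γ^k_{ij}` of a metric `g` (given as a matrix field). -/
def christoffel (g : EuclideanSpace ℝ (Fin n) → Matrix (Fin n) (Fin n) ℝ)
    (x : EuclideanSpace ℝ (Fin n)) (k i j : Fin n) : ℝ :=
  (1 / 2) * ∑ l : Fin n, (g x)⁻¹ k l *
    (pd (fun y => g y j l) x i + pd (fun y => g y i l) x j - pd (fun y => g y i j) x l)

/-- `x`-partial of the `i`-th component of `u : ℂ → ℝⁿ`. -/
def px (u : ℂ → EuclideanSpace ℝ (Fin n)) (i : Fin n) (z : ℂ) : ℝ :=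
  fderiv ℝ (fun w => u w i) z 1

/-- `y`-partial of the `i`-th component of `u : ℂ → ℝⁿ`. -/
def py (u : ℂ → EuclideanSpace ℝ (Fin n)) (i : Fin n) (z : ℂ) : ℝ :=
  fderiv ℝ (fun w => u w i) z Complex.I

/-- Laplacian of `f : ℂ → ℝ`. -/
def lap (f : ℂ → ℝ) (z : ℂ) : ℝ :=
  fderiv ℝ (fun w => fderiv ℝ f w 1) z 1 +
    fderiv ℝ (fun w => fderiv ℝ f w Complex.I) z Complex.I

/-- `u` is a harmonic map on `s` with respect to the metric `g`:
`Δu^k + Γ^k_{ij}(u)(∂ₓu^i ∂ₓu^j + ∂ᵧu^i ∂ᵧu^j) = 0`. -/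
def HarmonicWrt (g : EuclideanSpace ℝ (Fin n) → Matrix (Fin n) (Fin n) ℝ)
    (u : ℂ → EuclideanSpace ℝ (Fin n)) (s : Set ℂ) : Prop :=
  ∀ z ∈ s, ∀ k : Fin n,
    lap (fun w => u w k) z + ∑ i : Fin n, ∑ j : Fin n,
      christoffel g (u z) k i j * (px u i z * px u j z + py u i z * py u j z) = 0

/-- `u` is a conformal immersion on `s` with respect to the metric `g`. -/
def ConformalImmersionWrt (g : EuclideanSpace ℝ (Fin n) → Matrix (Fin n) (Fin n) ℝ)
    (u : ℂ → EuclideanSpace ℝ (Fin n)) (s : Set ℂ) : Prop :=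
  (∀ z ∈ s, Function.Injective (fderiv ℝ u z)) ∧
  ∃ φ : ℂ → ℝ, ∀ z ∈ s, ∀ v w : ℂ,
    (∑ i : Fin n, ∑ j : Fin n, g (u z) i j * fderiv ℝ u z v i * fderiv ℝ u z w j)
      = Real.exp (φ z) * (v * (starRingEnd ℂ) w).re

/-!
In normal coordinates the metric is `δ + o(|x|)` and the Christoffel symbols are `o(1)`. Along a
conformal harmonic map `u` this makes the Euclidean Laplacian `Δu` small compared with the energy
density `E`, and makes `du` a similarity up to a factor `1 + o(|u|)`. For an exact similarity with
`Δu = 0` the term `log |u|` would be subharmonic and `A |u|` would have Laplacian at least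
`A E / (2 |u|)`; this positive term dominates the errors, which are `o(E / |u|)`.

Since `log` is singular at the zeros of `u`, the computation is carried out for
`log (|u|² + s) / 2 + A √(|u|² + s)` with `s > 0`, whose sub-mean value inequality passes to the
limit `s → 0` by Fatou's lemma.
-/

open InnerProductSpace Laplacian Topology

section CircleAverage

variable {F : Type*} [NormedAddCommGroup F] [NormedSpace ℝ F]

theorem hasDerivAt_intervalIntegral_of_continuousOn {f f' : ℝ → ℝ → F} {s : Set ℝ} {a b t : ℝ}
    (hs : s ∈ 𝓝 t) (hf : ContinuousOn (fun q : ℝ × ℝ ↦ f q.1 q.2) (s ×ˢ uIcc a b))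
    (hf' : ContinuousOn (fun q : ℝ × ℝ ↦ f' q.1 q.2) (s ×ˢ uIcc a b))
    (hderiv : ∀ x ∈ s, ∀ θ ∈ uIcc a b, HasDerivAt (f · θ) (f' x θ) x) :
    HasDerivAt (fun x ↦ ∫ θ in a..b, f x θ) (∫ θ in a..b, f' t θ) t := by
  obtain ⟨K, hK, hKs, hKc⟩ := local_compact_nhds hs
  obtain ⟨C, hC⟩ := (hKc.prod isCompact_uIcc).exists_bound_of_continuousOn
    (hf'.mono (prod_mono_left hKs))
  have slice {h : ℝ → ℝ → F} (hh : ContinuousOn (fun q : ℝ × ℝ ↦ h q.1 q.2) (s ×ˢ uIcc a b))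
      {x : ℝ} (hx : x ∈ s) : IntervalIntegrable (h x) MeasureTheory.volume a b :=
    (hh.comp (f := fun θ ↦ (x, θ)) (by fun_prop)
      fun θ hθ ↦ mk_mem_prod hx hθ).intervalIntegrable
  have ht : t ∈ s := mem_of_mem_nhds hs
  refine (intervalIntegral.hasDerivAt_integral_of_dominated_loc_of_deriv_le (bound := fun _ ↦ C)
    hK ?_ (slice hf ht) (slice hf' ht).def'.aestronglyMeasurable ?_ (by simp) ?_).2
  · filter_upwards [hs] with x hx using (slice hf hx).def'.aestronglyMeasurable
  · exact .of_forall fun θ hθ x hx ↦ hC (x, θ) ⟨hx, uIoc_subset_uIcc hθ⟩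
  · exact .of_forall fun θ hθ x hx ↦ hderiv x (hKs hx) θ (uIoc_subset_uIcc hθ)

theorem hasDerivAt_circleMap_radius (c : ℂ) (t θ : ℝ) :
    HasDerivAt (fun r : ℝ ↦ circleMap c r θ) (circleMap 0 1 θ) t := by
  simpa [circleMap] using
    ((Complex.ofRealCLM.hasDerivAt (x := t)).mul_const (Complex.exp (θ * Complex.I))).const_add c

theorem laplacian_eq_fderiv_fderiv (f : ℂ → F) (w : ℂ) :
    Δ f w = fderiv ℝ (fderiv ℝ f) w 1 1 + fderiv ℝ (fderiv ℝ f) w Complex.I Complex.I := by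
  simp [laplacian_eq_iteratedFDeriv_complexPlane, iteratedFDeriv_two_apply]

theorem laplacian_eq_fderiv_fderiv_circleMap (f : ℂ → F) (w : ℂ) (θ : ℝ) :
    Δ f w = fderiv ℝ (fderiv ℝ f) w (circleMap 0 1 θ) (circleMap 0 1 θ) +
      fderiv ℝ (fderiv ℝ f) w (circleMap 0 1 θ * Complex.I) (circleMap 0 1 θ * Complex.I) := by
  have he : circleMap 0 1 θ = cos θ • (1 : ℂ) + sin θ • Complex.I := by
    simp [circleMap, Complex.exp_mul_I]
  have heI : circleMap 0 1 θ * Complex.I = -sin θ • (1 : ℂ) + cos θ • Complex.I := by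
    rw [he]
    apply Complex.ext <;> simp
  rw [laplacian_eq_fderiv_fderiv, heI, he]
  simp only [map_add, map_smul, add_apply, smul_apply]
  linear_combination (norm := module) (-sin_sq_add_cos_sq θ) •
    (fderiv ℝ (fderiv ℝ f) w 1 1 + fderiv ℝ (fderiv ℝ f) w Complex.I Complex.I)

variable {f : ℂ → F} {c : ℂ} {R t : ℝ}

theorem circleMap_mem_ball (ht : t ∈ Ioo (-R) R) (θ : ℝ) : circleMap c t θ ∈ ball c R := by
  simpa [circleMap, abs_lt] using ht

theorem hasDerivAt_comp_circleMap_radius (hf : ContDiffOn ℝ 1 f (ball c R)) (ht : t ∈ Ioo (-R) R)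
    (θ : ℝ) :
    HasDerivAt (fun r ↦ f (circleMap c r θ)) (fderiv ℝ f (circleMap c t θ) (circleMap 0 1 θ)) t :=
  ((hf.differentiableOn one_ne_zero).differentiableAt
    (isOpen_ball.mem_nhds (circleMap_mem_ball ht θ))).hasFDerivAt.comp_hasDerivAt t
      (hasDerivAt_circleMap_radius c t θ)

theorem continuousOn_comp_circleMap {X : Type*} [TopologicalSpace X] {f : ℂ → X}
    (hf : ContinuousOn f (ball c R)) (T : Set ℝ) :
    ContinuousOn (fun q : ℝ × ℝ ↦ f (circleMap c q.1 q.2)) (Ioo (-R) R ×ˢ T) :=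
  hf.comp (by fun_prop) fun q hq ↦ circleMap_mem_ball hq.1 q.2

theorem hasDerivAt_integral_circleMap (hf : ContDiffOn ℝ 1 f (ball c R)) (ht : t ∈ Ioo (-R) R) :
    HasDerivAt (fun r ↦ ∫ θ in 0..2 * π, f (circleMap c r θ))
      (∫ θ in 0..2 * π, fderiv ℝ f (circleMap c t θ) (circleMap 0 1 θ)) t := by
  have hfderiv := continuousOn_comp_circleMap (hf.continuousOn_fderiv_of_isOpen isOpen_ball le_rfl)
    (uIcc 0 (2 * π))
  exact hasDerivAt_intervalIntegral_of_continuousOn (isOpen_Ioo.mem_nhds ht)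
    (continuousOn_comp_circleMap hf.continuousOn _)
    (hfderiv.clm_apply (g := fun q ↦ circleMap 0 1 q.2) (by fun_prop))
    fun r hr θ _ ↦ hasDerivAt_comp_circleMap_radius hf hr θ

theorem hasDerivAt_integral_circleMap_apply {E : Type*} [NormedAddCommGroup E] [NormedSpace ℝ E]
    {D : ℂ → E →L[ℝ] F} {v : ℝ → E} (hD : ContDiffOn ℝ 1 D (ball c R)) (hv : Continuous v)
    (ht : t ∈ Ioo (-R) R) :
    HasDerivAt (fun r ↦ ∫ θ in 0..2 * π, D (circleMap c r θ) (v θ))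
      (∫ θ in 0..2 * π, fderiv ℝ D (circleMap c t θ) (circleMap 0 1 θ) (v θ)) t := by
  have hv' : ContinuousOn (fun q : ℝ × ℝ ↦ v q.2) (Ioo (-R) R ×ˢ uIcc 0 (2 * π)) :=
    (hv.comp continuous_snd).continuousOn
  have hradial : ContinuousOn (fun q : ℝ × ℝ ↦ circleMap 0 1 q.2)
      (Ioo (-R) R ×ˢ uIcc 0 (2 * π)) := by
    fun_prop
  have hfderiv : ContinuousOn (fun q : ℝ × ℝ ↦ fderiv ℝ D (circleMap c q.1 q.2))
      (Ioo (-R) R ×ˢ uIcc 0 (2 * π)) :=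
    continuousOn_comp_circleMap (hD.continuousOn_fderiv_of_isOpen isOpen_ball le_rfl) _
  refine hasDerivAt_intervalIntegral_of_continuousOn
    (f := fun r θ ↦ D (circleMap c r θ) (v θ))
    (f' := fun r θ ↦ fderiv ℝ D (circleMap c r θ) (circleMap 0 1 θ) (v θ)) (isOpen_Ioo.mem_nhds ht)
    ((continuousOn_comp_circleMap hD.continuousOn _).clm_apply hv')
    ((hfderiv.clm_apply hradial).clm_apply hv') fun r hr θ _ ↦ ?_
  simpa using (hasDerivAt_comp_circleMap_radius hD hr θ).clm_apply (hasDerivAt_const r (v θ))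

theorem integral_fderiv_fderiv_circleMap_tangent [CompleteSpace F]
    (hf : ContDiffOn ℝ 2 f (ball c R)) (ht : t ∈ Ioo (-R) R) :
    t • ∫ θ in 0..2 * π, fderiv ℝ (fderiv ℝ f) (circleMap c t θ)
        (circleMap 0 1 θ * Complex.I) (circleMap 0 1 θ * Complex.I) =
      ∫ θ in 0..2 * π, fderiv ℝ f (circleMap c t θ) (circleMap 0 1 θ) := by
  have hD : ContDiffOn ℝ 1 (fderiv ℝ f) (ball c R) := hf.fderiv_of_isOpen isOpen_ball le_rfl
  have hmem := circleMap_mem_ball (c := c) ht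
  have hderiv (θ : ℝ) : HasDerivAt
      (fun θ ↦ fderiv ℝ f (circleMap c t θ) (circleMap 0 1 θ * Complex.I))
      (t • fderiv ℝ (fderiv ℝ f) (circleMap c t θ)
          (circleMap 0 1 θ * Complex.I) (circleMap 0 1 θ * Complex.I) -
        fderiv ℝ f (circleMap c t θ) (circleMap 0 1 θ)) θ := by
    have hDθ := ((hD.differentiableOn one_ne_zero).differentiableAt
      (isOpen_ball.mem_nhds (hmem θ))).hasFDerivAt.comp_hasDerivAt θ (hasDerivAt_circleMap c t θ)
    refine (hDθ.clm_apply ((hasDerivAt_circleMap 0 1 θ).mul_const Complex.I)).congr_deriv ?_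
    have hscale : circleMap 0 t θ * Complex.I = t • (circleMap 0 1 θ * Complex.I) := by
      simp [circleMap, mul_assoc]
    have hsq : circleMap 0 1 θ * Complex.I * Complex.I = -circleMap 0 1 θ := by
      rw [mul_assoc, Complex.I_mul_I, mul_neg_one]
    simp only [hscale, hsq, map_smul, map_neg, smul_apply, sub_eq_add_neg, Function.comp_apply]
  have hcont₁ : Continuous fun θ ↦ fderiv ℝ f (circleMap c t θ) (circleMap 0 1 θ) :=
    (hD.continuousOn.comp_continuous (by fun_prop) hmem).clm_apply (by fun_prop)
  have hcont₂ : Continuous fun θ ↦ t • fderiv ℝ (fderiv ℝ f) (circleMap c t θ)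
      (circleMap 0 1 θ * Complex.I) (circleMap 0 1 θ * Complex.I) :=
    continuous_const.smul ((((hD.continuousOn_fderiv_of_isOpen isOpen_ball le_rfl).comp_continuous
      (by fun_prop) hmem).clm_apply (by fun_prop)).clm_apply (by fun_prop))
  have hperiod := intervalIntegral.integral_eq_sub_of_hasDerivAt (a := 0) (b := 2 * π)
    (fun θ _ ↦ hderiv θ) ((hcont₂.sub hcont₁).intervalIntegrable _ _)
  rw [intervalIntegral.integral_sub (hcont₂.intervalIntegrable _ _)
    (hcont₁.intervalIntegrable _ _), intervalIntegral.integral_smul] at hperiod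
  rw [← sub_eq_zero, hperiod]
  simp [circleMap]

theorem hasDerivAt_smul_integral_fderiv_circleMap [CompleteSpace F]
    (hf : ContDiffOn ℝ 2 f (ball c R)) (ht : t ∈ Ioo (-R) R) :
    HasDerivAt (fun r ↦ r • ∫ θ in 0..2 * π, fderiv ℝ f (circleMap c r θ) (circleMap 0 1 θ))
      (t • ∫ θ in 0..2 * π, Δ f (circleMap c t θ)) t := by
  have hD : ContDiffOn ℝ 1 (fderiv ℝ f) (ball c R) := hf.fderiv_of_isOpen isOpen_ball le_rfl
  have hD' : Continuous fun θ ↦ fderiv ℝ (fderiv ℝ f) (circleMap c t θ) :=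
    (hD.continuousOn_fderiv_of_isOpen isOpen_ball le_rfl).comp_continuous (by fun_prop)
      (circleMap_mem_ball ht)
  refine ((hasDerivAt_id t).smul
    (hasDerivAt_integral_circleMap_apply hD (by fun_prop) ht)).congr_deriv ?_
  have hΔ := intervalIntegral.integral_congr (a := 0) (b := 2 * π) (μ := MeasureTheory.volume)
    fun θ _ ↦ laplacian_eq_fderiv_fderiv_circleMap f (circleMap c t θ) θ
  rw [hΔ, one_smul, ← integral_fderiv_fderiv_circleMap_tangent hf ht, id, ← smul_add,
    intervalIntegral.integral_add
      (Continuous.intervalIntegrable (by fun_prop) _ _)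
      (Continuous.intervalIntegrable (by fun_prop) _ _)]

theorem le_circleAverage_of_laplacian_nonneg {f : ℂ → ℝ} {U : Set ℂ} {r : ℝ} (hU : IsOpen U)
    (hf : ContDiffOn ℝ 2 f U) (hr : 0 ≤ r) (hrU : closedBall c r ⊆ U)
    (hΔ : ∀ w ∈ ball c r, 0 ≤ Δ f w) : f c ≤ circleAverage f c r := by
  obtain ⟨δ, hδ, hδU⟩ := (isCompact_closedBall c r).exists_thickening_subset_open hU hrU
  rw [thickening_closedBall hδ hr] at hδU
  have hf' : ContDiffOn ℝ 2 f (ball c (δ + r)) := hf.mono hδU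
  have hIoo {t : ℝ} (ht : t ∈ Icc 0 r) : t ∈ Ioo (-(δ + r)) (δ + r) :=
    ⟨by linarith [ht.1], by linarith [ht.2]⟩
  have hflux (t) (ht : t ∈ Icc 0 r) := hasDerivAt_smul_integral_fderiv_circleMap hf' (hIoo ht)
  have hflux_mono : MonotoneOn
      (fun t ↦ t • ∫ θ in 0..2 * π, fderiv ℝ f (circleMap c t θ) (circleMap 0 1 θ)) (Icc 0 r) := by
    refine monotoneOn_of_hasDerivWithinAt_nonneg (convex_Icc 0 r)
      (fun t ht ↦ (hflux t ht).continuousAt.continuousWithinAt)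
      (fun t ht ↦ (hflux t (interior_subset ht)).hasDerivWithinAt) fun t ht ↦ ?_
    rw [interior_Icc] at ht
    exact smul_nonneg ht.1.le (intervalIntegral.integral_nonneg two_pi_pos.le fun θ _ ↦
      hΔ _ (circleMap_mem_ball ⟨by linarith [ht.1], ht.2⟩ θ))
  have hmean (t) (ht : t ∈ Icc 0 r) :=
    hasDerivAt_integral_circleMap (hf'.of_le one_le_two) (hIoo ht)
  have hmean_mono : MonotoneOn (fun t ↦ ∫ θ in 0..2 * π, f (circleMap c t θ)) (Icc 0 r) := by
    refine monotoneOn_of_hasDerivWithinAt_nonneg (convex_Icc 0 r)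
      (fun t ht ↦ (hmean t ht).continuousAt.continuousWithinAt)
      (fun t ht ↦ (hmean t (interior_subset ht)).hasDerivWithinAt) fun t ht ↦ ?_
    rw [interior_Icc] at ht
    have hflux_le := hflux_mono (left_mem_Icc.2 hr) (Ioo_subset_Icc_self ht) ht.1.le
    simp only [smul_eq_mul, zero_mul] at hflux_le
    exact nonneg_of_mul_nonneg_right hflux_le ht.1
  calc f c = circleAverage f c 0 := (circleAverage_zero ..).symm
    _ ≤ circleAverage f c r := by
      simp only [circleAverage_def]
      gcongr
      exact hmean_mono (left_mem_Icc.2 hr) (right_mem_Icc.2 hr) hr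

end CircleAverage

section ChainRule

variable {E V : Type*} [NormedAddCommGroup E] [NormedSpace ℝ E] [NormedAddCommGroup V]

theorem fderiv_fderiv_apply [NormedSpace ℝ V] {f : E → V} {x : E} (hf : ContDiffAt ℝ 2 f x)
    (v w : E) : fderiv ℝ (fderiv ℝ f) x w v = fderiv ℝ (fun y ↦ fderiv ℝ f y v) x w := by
  have hf' := (hf.fderiv_right le_rfl).differentiableAt one_ne_zero
  simp [fderiv_clm_apply hf' (differentiableAt_const v)]

theorem fderiv_fderiv_comp_apply {ψ ψ' : ℝ → ℝ} {ψ'' : ℝ} {T : E → ℝ} {x : E}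
    (hψ : ∀ᶠ t in 𝓝 (T x), HasDerivAt ψ (ψ' t) t) (hψ' : HasDerivAt ψ' ψ'' (T x))
    (hT : ContDiffAt ℝ 2 T x) (v : E) :
    fderiv ℝ (fderiv ℝ (ψ ∘ T)) x v v =
      ψ' (T x) * fderiv ℝ (fderiv ℝ T) x v v + ψ'' * fderiv ℝ T x v ^ 2 := by
  have hcomp : fderiv ℝ (ψ ∘ T) =ᶠ[𝓝 x] (ψ' ∘ T) • fderiv ℝ T := by
    filter_upwards [hT.eventually (by simp), hT.continuousAt.eventually hψ] with y hTy hψy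
    exact (hψy.comp_hasFDerivAt y (hTy.differentiableAt two_ne_zero).hasFDerivAt).fderiv
  have hT₁ := (hT.differentiableAt two_ne_zero).hasFDerivAt
  have hT₂ := ((hT.fderiv_right le_rfl).differentiableAt one_ne_zero).hasFDerivAt
  rw [hcomp.fderiv_eq, ((hψ'.comp_hasFDerivAt x hT₁).smul hT₂).fderiv]
  simp [pow_two, mul_assoc]

theorem laplacian_comp {ψ ψ' : ℝ → ℝ} {ψ'' : ℝ} {T : ℂ → ℝ} {z : ℂ}
    (hψ : ∀ᶠ t in 𝓝 (T z), HasDerivAt ψ (ψ' t) t) (hψ' : HasDerivAt ψ' ψ'' (T z))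
    (hT : ContDiffAt ℝ 2 T z) :
    Δ (ψ ∘ T) z =
      ψ' (T z) * Δ T z + ψ'' * (fderiv ℝ T z 1 ^ 2 + fderiv ℝ T z Complex.I ^ 2) := by
  simp only [laplacian_eq_fderiv_fderiv, fderiv_fderiv_comp_apply hψ hψ' hT]
  ring

variable [InnerProductSpace ℝ V]

theorem fderiv_norm_sq_add_const_apply {u : E → V} {x : E} (hu : DifferentiableAt ℝ u x) (s : ℝ)
    (v : E) : fderiv ℝ (fun y ↦ ‖u y‖ ^ 2 + s) x v = 2 * ⟪u x, fderiv ℝ u x v⟫_ℝ := by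
  simp [(hu.hasFDerivAt.norm_sq.add_const s).fderiv]

theorem fderiv_fderiv_norm_sq_add_const_apply {u : E → V} {x : E} (hu : ContDiffAt ℝ 2 u x)
    (s : ℝ) (v : E) :
    fderiv ℝ (fderiv ℝ fun y ↦ ‖u y‖ ^ 2 + s) x v v =
      2 * (‖fderiv ℝ u x v‖ ^ 2 + ⟪u x, fderiv ℝ (fderiv ℝ u) x v v⟫_ℝ) := by
  have hfirst : (fun y ↦ fderiv ℝ (fun y ↦ ‖u y‖ ^ 2 + s) y v) =ᶠ[𝓝 x]
      fun y ↦ 2 * ⟪u y, fderiv ℝ u y v⟫_ℝ := by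
    filter_upwards [hu.eventually (by simp)] with y hy
    exact fderiv_norm_sq_add_const_apply (hy.differentiableAt two_ne_zero) s v
  have hu₁ := hu.differentiableAt two_ne_zero
  have hu₂ : DifferentiableAt ℝ (fun y ↦ fderiv ℝ u y v) x :=
    ((hu.fderiv_right le_rfl).differentiableAt one_ne_zero).clm_apply (differentiableAt_const v)
  rw [fderiv_fderiv_apply ((hu.norm_sq ℝ).add contDiffAt_const), hfirst.fderiv_eq,
    fderiv_const_mul (hu₁.inner ℝ hu₂), smul_apply, fderiv_inner_apply ℝ hu₁ hu₂,
    fderiv_fderiv_apply hu, real_inner_self_eq_norm_sq, smul_eq_mul, add_comm]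

end ChainRule

/-- The energy density `|∂ₓu|² + |∂ᵧu|²` of a map of the plane. -/
def energyDensity {V : Type*} [NormedAddCommGroup V] [NormedSpace ℝ V] (u : ℂ → V) (z : ℂ) : ℝ :=
  ‖fderiv ℝ u z 1‖ ^ 2 + ‖fderiv ℝ u z Complex.I‖ ^ 2

/-- The function `φ = log ‖·‖ + A ‖·‖` expressed through `t = ‖·‖ ^ 2`. Evaluating it at
`‖x‖ ^ 2 + s` with `s > 0` smooths out the singularity of `φ` at the origin. -/
def profile (A t : ℝ) : ℝ :=
  log t / 2 + A * √t

section Profile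

variable {V : Type*} [NormedAddCommGroup V] [InnerProductSpace ℝ V]

theorem energyDensity_nonneg (u : ℂ → V) (z : ℂ) : 0 ≤ energyDensity u z := by
  unfold energyDensity
  positivity

theorem laplacian_norm_sq_add_const {u : ℂ → V} {z : ℂ} (hu : ContDiffAt ℝ 2 u z) (s : ℝ) :
    Δ (fun w ↦ ‖u w‖ ^ 2 + s) z = 2 * (energyDensity u z + ⟪u z, Δ u z⟫_ℝ) := by
  simp only [laplacian_eq_fderiv_fderiv, fderiv_fderiv_norm_sq_add_const_apply hu, energyDensity,
    inner_add_right]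
  ring

theorem hasDerivAt_profile (A : ℝ) {t : ℝ} (ht : 0 < t) :
    HasDerivAt (profile A) ((1 + A * √t) / (2 * t)) t := by
  refine (((hasDerivAt_log ht.ne').div_const 2).add
    ((hasDerivAt_sqrt ht.ne').const_mul A)).congr_deriv ?_
  obtain ⟨R, hR, rfl⟩ : ∃ R > 0, t = R ^ 2 := ⟨√t, sqrt_pos.2 ht, (sq_sqrt ht.le).symm⟩
  rw [sqrt_sq hR.le]
  field_simp

theorem hasDerivAt_deriv_profile (A : ℝ) {t : ℝ} (ht : 0 < t) :
    HasDerivAt (fun t ↦ (1 + A * √t) / (2 * t)) (-(2 + A * √t) / (4 * t ^ 2)) t := by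
  refine ((((hasDerivAt_sqrt ht.ne').const_mul A).const_add 1).fun_div
    ((hasDerivAt_id' t).const_mul 2) (by positivity)).congr_deriv ?_
  obtain ⟨R, hR, rfl⟩ : ∃ R > 0, t = R ^ 2 := ⟨√t, sqrt_pos.2 ht, (sq_sqrt ht.le).symm⟩
  rw [sqrt_sq hR.le]
  field_simp
  ring

theorem contDiffAt_profile (A : ℝ) {t : ℝ} (ht : 0 < t) : ContDiffAt ℝ 2 (profile A) t :=
  ((contDiffAt_log.2 ht.ne').div_const 2).add (contDiffAt_const.mul (contDiffAt_sqrt ht.ne'))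

theorem inner_sq_add_inner_sq_le {L : ℂ →L[ℝ] V} {K : ℝ} (hL : ∀ v, ‖L v‖ ^ 2 ≤ K * ‖v‖ ^ 2)
    (x : V) : ⟪x, L 1⟫_ℝ ^ 2 + ⟪x, L Complex.I⟫_ℝ ^ 2 ≤ K * ‖x‖ ^ 2 := by
  set S := ⟪x, L 1⟫_ℝ ^ 2 + ⟪x, L Complex.I⟫_ℝ ^ 2 with hS
  have hK : 0 ≤ K := (sq_nonneg _).trans (by simpa using hL 1)
  obtain hS₀ | hS₀ : 0 = S ∨ 0 < S := (by positivity : 0 ≤ S).eq_or_lt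
  · rw [← hS₀]
    positivity
  -- `v` is the adjoint of `L` applied to `x`.
  set v : ℂ := ⟪x, L 1⟫_ℝ • 1 + ⟪x, L Complex.I⟫_ℝ • Complex.I
  have hv : ‖v‖ ^ 2 = S := by
    rw [← Complex.normSq_eq_norm_sq, Complex.normSq_apply]
    simp [v, hS, pow_two]
  have hLv : ⟪x, L v⟫_ℝ = S := by
    simp only [v, map_add, map_smul, inner_add_right, real_inner_smul_right, hS, pow_two]
  refine le_of_mul_le_mul_right ?_ hS₀
  calc S * S = ⟪x, L v⟫_ℝ * ⟪x, L v⟫_ℝ := by rw [hLv]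
    _ ≤ ‖x‖ * ‖x‖ * (‖L v‖ * ‖L v‖) := by
      simpa only [real_inner_self_eq_norm_mul_norm] using real_inner_mul_inner_self_le x (L v)
    _ ≤ ‖x‖ * ‖x‖ * (K * S) :=
      mul_le_mul_of_nonneg_left (by simpa only [hv, pow_two] using hL v) (by positivity)
    _ = K * ‖x‖ ^ 2 * S := by ring

theorem sum_profile_terms_nonneg {A c R E W S : ℝ} (hR : 0 < R) (hR₁ : R ≤ 1) (hA : 0 < A)
    (hc : 0 ≤ c) (hcA : c * (4 + 3 * A) ≤ A) (hE : 0 ≤ E) (hW : -(c * R * E) ≤ W)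
    (hS : S ≤ (1 + c * R) / 2 * E * R ^ 2) :
    0 ≤ (1 + A * R) / (2 * R ^ 2) * (2 * (E + W)) + -(2 + A * R) / (4 * (R ^ 2) ^ 2) * (4 * S) := by
  have hcR : 0 ≤ R / 2 * (A - c * (4 + 3 * (A * R))) := by
    have : c * (4 + 3 * (A * R)) ≤ c * (4 + 3 * A) := by
      gcongr
      exact mul_le_of_le_one_right hA.le hR₁
    have : 0 ≤ A - c * (4 + 3 * (A * R)) := by linarith
    positivity
  have hW' : (1 + A * R) * ((1 - c * R) * E) ≤ (1 + A * R) * (E + W) := by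
    gcongr
    linarith
  have hS' : (2 + A * R) * S ≤ (2 + A * R) * ((1 + c * R) / 2 * E * R ^ 2) := by gcongr
  calc 0 ≤ (R / 2 * (A - c * (4 + 3 * (A * R)))) * E / R ^ 2 := by positivity
    _ = ((1 + A * R) * ((1 - c * R) * E) * R ^ 2
          - (2 + A * R) * ((1 + c * R) / 2 * E * R ^ 2)) / R ^ 4 := by
      field_simp
      ring
    _ ≤ ((1 + A * R) * (E + W) * R ^ 2 - (2 + A * R) * S) / R ^ 4 := by gcongr
    _ = _ := by
      field_simp
      ring

theorem laplacian_profile_nonneg {A c s : ℝ} {u : ℂ → V} {z : ℂ} (hA : 0 < A) (hc : 0 ≤ c)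
    (hcA : c * (4 + 3 * A) ≤ A) (hs : 0 < s) (hu : ContDiffAt ℝ 2 u z) (hus : ‖u z‖ ^ 2 + s ≤ 1)
    (hconf : ∀ v, ‖fderiv ℝ u z v‖ ^ 2 ≤ (1 + c * ‖u z‖) / 2 * energyDensity u z * ‖v‖ ^ 2)
    (hΔ : ‖Δ u z‖ ≤ c * energyDensity u z) :
    0 ≤ Δ (fun w ↦ profile A (‖u w‖ ^ 2 + s)) z := by
  have ht : 0 < ‖u z‖ ^ 2 + s := by positivity
  have hE := energyDensity_nonneg u z
  have hR : ‖u z‖ ≤ √(‖u z‖ ^ 2 + s) := le_sqrt_of_sq_le (by linarith)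
  have hW : -(c * √(‖u z‖ ^ 2 + s) * energyDensity u z) ≤ ⟪u z, Δ u z⟫_ℝ := by
    refine neg_le_of_abs_le ((abs_real_inner_le_norm _ _).trans ?_)
    calc ‖u z‖ * ‖Δ u z‖ ≤ √(‖u z‖ ^ 2 + s) * (c * energyDensity u z) := by gcongr
      _ = c * √(‖u z‖ ^ 2 + s) * energyDensity u z := by ring
  have hS : ⟪u z, fderiv ℝ u z 1⟫_ℝ ^ 2 + ⟪u z, fderiv ℝ u z Complex.I⟫_ℝ ^ 2 ≤
      (1 + c * √(‖u z‖ ^ 2 + s)) / 2 * energyDensity u z * √(‖u z‖ ^ 2 + s) ^ 2 :=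
    (inner_sq_add_inner_sq_le hconf _).trans (by gcongr)
  have hlap := laplacian_comp (T := fun w ↦ ‖u w‖ ^ 2 + s)
    ((lt_mem_nhds ht).mono fun t ht ↦ hasDerivAt_profile A ht) (hasDerivAt_deriv_profile A ht)
    ((hu.norm_sq ℝ).add contDiffAt_const)
  have hu₁ := hu.differentiableAt two_ne_zero
  simp only [laplacian_norm_sq_add_const hu, fderiv_norm_sq_add_const_apply hu₁, mul_pow,
    ← mul_add] at hlap
  norm_num only at hlap
  have := sum_profile_terms_nonneg (sqrt_pos.2 ht) (sqrt_le_one.2 hus) hA hc hcA hE hW hS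
  rw [sq_sqrt ht.le] at this
  exact this.trans_eq hlap.symm

end Profile

section Metric

variable {g : EuclideanSpace ℝ (Fin n) → Matrix (Fin n) (Fin n) ℝ}
  {u : ℂ → EuclideanSpace ℝ (Fin n)} {z : ℂ}

theorem abs_sum_mul_mul_le {ι : Type*} [Fintype ι] {a : ι → ι → ℝ} {c : ℝ}
    (ha : ∀ i j, |a i j| ≤ c) (p q : EuclideanSpace ℝ ι) :
    |∑ i, ∑ j, a i j * p i * q j| ≤ Fintype.card ι ^ 2 * c * (‖p‖ * ‖q‖) := by
  have hterm (i j : ι) : |a i j * p i * q j| ≤ c * (‖p‖ * ‖q‖) := by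
    rw [abs_mul, abs_mul, mul_assoc]
    have hc : 0 ≤ c := (abs_nonneg _).trans (ha i j)
    have hp : |p i| ≤ ‖p‖ := PiLp.norm_apply_le p i
    have hq : |q j| ≤ ‖q‖ := PiLp.norm_apply_le q j
    gcongr
    exact ha i j
  calc |∑ i, ∑ j, a i j * p i * q j| ≤ ∑ i, ∑ j, |a i j * p i * q j| :=
        (Finset.abs_sum_le_sum_abs _ _).trans
          (Finset.sum_le_sum fun i _ ↦ Finset.abs_sum_le_sum_abs _ _)
    _ ≤ ∑ _i : ι, ∑ _j : ι, c * (‖p‖ * ‖q‖) :=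
        Finset.sum_le_sum fun i _ ↦ Finset.sum_le_sum fun j _ ↦ hterm i j
    _ = Fintype.card ι ^ 2 * c * (‖p‖ * ‖q‖) := by
      simp only [Finset.sum_const, Finset.card_univ, nsmul_eq_mul]
      ring

theorem eventually_abs_sum_sub_norm_sq_le
    (hg : ∀ i j, DifferentiableAt ℝ (fun x ↦ g x i j) 0) (hg₀ : g 0 = 1)
    (hg₁ : ∀ i j, fderiv ℝ (fun x ↦ g x i j) 0 = 0) {c : ℝ} (hc : 0 < c) :
    ∀ᶠ x in 𝓝 0, ∀ a : EuclideanSpace ℝ (Fin n),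
      |∑ i, ∑ j, g x i j * a i * a j - ‖a‖ ^ 2| ≤ c * ‖x‖ * ‖a‖ ^ 2 := by
  set η := c / (n ^ 2 + 1) with hη
  have hentry (i j : Fin n) : ∀ᶠ x in 𝓝 0, |(g x - 1) i j| ≤ η * ‖x‖ := by
    have hdiff := (hg i j).hasFDerivAt
    rw [hg₁] at hdiff
    simpa [hg₀] using hdiff.isLittleO.def (show 0 < η by positivity)
  filter_upwards [Filter.eventually_all.2 fun i ↦ Filter.eventually_all.2 (hentry i)] with x hx a
  have hsum : ∑ i, ∑ j, g x i j * a i * a j - ‖a‖ ^ 2 = ∑ i, ∑ j, (g x - 1) i j * a i * a j := by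
    rw [EuclideanSpace.real_norm_sq_eq]
    simp [sub_mul, Matrix.one_apply, pow_two]
  have hcard : n ^ 2 * η ≤ c := by
    rw [hη, ← mul_div_assoc, div_le_iff₀ (by positivity)]
    linarith
  calc |∑ i, ∑ j, g x i j * a i * a j - ‖a‖ ^ 2| ≤ n ^ 2 * (η * ‖x‖) * (‖a‖ * ‖a‖) := by
        simpa only [hsum, Fintype.card_fin] using abs_sum_mul_mul_le hx a a
    _ = n ^ 2 * η * ‖x‖ * ‖a‖ ^ 2 := by ring
    _ ≤ c * ‖x‖ * ‖a‖ ^ 2 := by gcongr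

theorem christoffel_eq_zero {x : EuclideanSpace ℝ (Fin n)}
    (hg : ∀ i j, fderiv ℝ (fun y ↦ g y i j) x = 0) (k i j : Fin n) :
    christoffel g x k i j = 0 := by
  simp [christoffel, pd, hg]

theorem continuousAt_christoffel {x : EuclideanSpace ℝ (Fin n)}
    (hg : ∀ i j, ContDiffAt ℝ 1 (fun y ↦ g y i j) x) (hdet : (g x).det ≠ 0) (k i j : Fin n) :
    ContinuousAt (fun x ↦ christoffel g x k i j) x := by
  have hpd (i j k : Fin n) : ContinuousAt (fun x ↦ pd (fun y ↦ g y i j) x k) x :=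
    ((hg i j).fderiv_right (m := 0) le_rfl).continuousAt.clm_apply continuousAt_const
  have hg' : ContinuousAt g x :=
    continuousAt_pi.2 fun i ↦ continuousAt_pi.2 fun j ↦ (hg i j).continuousAt
  have hinv' : ContinuousAt (fun x ↦ (g x)⁻¹) x := by
    refine (continuousAt_matrix_inv (g x) ?_).comp hg'
    simpa only [Ring.inverse_eq_inv'] using continuousAt_inv₀ hdet
  have hinv (k l : Fin n) : ContinuousAt (fun x ↦ (g x)⁻¹ k l) x :=
    continuousAt_pi.1 (continuousAt_pi.1 hinv' k) l
  exact continuousAt_const.mul (tendsto_finsetSum _ fun l _ ↦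
    (hinv k l).mul (((hpd j l i).add (hpd i l j)).sub (hpd i j l)))

theorem eventually_abs_christoffel_le (hg : ∀ i j, ContDiffAt ℝ 1 (fun x ↦ g x i j) 0)
    (hg₀ : g 0 = 1) (hg₁ : ∀ i j, fderiv ℝ (fun x ↦ g x i j) 0 = 0) {η : ℝ} (hη : 0 < η) :
    ∀ᶠ x in 𝓝 0, ∀ k i j, |christoffel g x k i j| ≤ η := by
  simp only [Filter.eventually_all]
  intro k i j
  have hcont := (continuousAt_christoffel hg (by simp [hg₀]) k i j).abs
  have hlt : |christoffel g 0 k i j| < η := by simpa [christoffel_eq_zero hg₁] using hη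
  exact (hcont.eventually_lt_const hlt).mono fun _ ↦ le_of_lt

theorem lap_eq_laplacian {f : ℂ → ℝ} (hf : ContDiffAt ℝ 2 f z) : lap f z = Δ f z := by
  simp only [lap, laplacian_eq_fderiv_fderiv, fderiv_fderiv_apply hf]

theorem lap_apply (hu : ContDiffAt ℝ 2 u z) (k : Fin n) : lap (fun w ↦ u w k) z = Δ u z k := by
  rw [lap_eq_laplacian (contDiffAt_euclidean.1 hu k)]
  exact hu.laplacian_CLM_comp_left (l := EuclideanSpace.proj k)

theorem fderiv_apply_coord (hu : DifferentiableAt ℝ u z) (i : Fin n) (v : ℂ) :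
    fderiv ℝ (fun w ↦ u w i) z v = fderiv ℝ u z v i := by
  have := ((EuclideanSpace.proj (𝕜 := ℝ) i).hasFDerivAt.comp z hu.hasFDerivAt).fderiv
  exact DFunLike.congr_fun this v

theorem norm_laplacian_le_of_harmonicWrt {s : Set ℂ} {η : ℝ} (hharm : HarmonicWrt g u s)
    (hz : z ∈ s) (hu : ContDiffAt ℝ 2 u z) (hΓ : ∀ k i j, |christoffel g (u z) k i j| ≤ η) :
    ‖Δ u z‖ ≤ n ^ 3 * η * energyDensity u z := by
  have hu₁ := hu.differentiableAt two_ne_zero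
  have hcoord (k : Fin n) : |Δ u z k| ≤ n ^ 2 * η * energyDensity u z := by
    have hk := hharm z hz k
    simp only [lap_apply hu, px, py, fderiv_apply_coord hu₁, mul_add, ← mul_assoc,
      Finset.sum_add_distrib] at hk
    rw [eq_neg_of_add_eq_zero_left hk, abs_neg]
    refine (abs_add_le _ _).trans ((add_le_add (abs_sum_mul_mul_le (hΓ k) _ _)
      (abs_sum_mul_mul_le (hΓ k) _ _)).trans_eq ?_)
    rw [Fintype.card_fin, energyDensity]
    ring
  calc ‖Δ u z‖ = ‖∑ k, Δ u z k • EuclideanSpace.basisFun (Fin n) ℝ k‖ := by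
        conv_lhs => rw [← (EuclideanSpace.basisFun (Fin n) ℝ).sum_repr (Δ u z)]
        simp only [EuclideanSpace.basisFun_repr]
    _ ≤ ∑ _k : Fin n, n ^ 2 * η * energyDensity u z := norm_sum_le_of_le _ fun k _ ↦ by
      simpa [norm_smul] using hcoord k
    _ = n ^ 3 * η * energyDensity u z := by
      simp only [Finset.sum_const, Finset.card_univ, Fintype.card_fin, nsmul_eq_mul]
      ring

/-- `u` pulls `g` back to a multiple of the Euclidean metric at `z`. Unlike a conformal immersion,
`u` is allowed to have a branch point, where the conformal factor vanishes. -/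
def WeaklyConformalAt (g : EuclideanSpace ℝ (Fin n) → Matrix (Fin n) (Fin n) ℝ)
    (u : ℂ → EuclideanSpace ℝ (Fin n)) (z : ℂ) : Prop :=
  ∃ lam : ℝ, ∀ v : ℂ,
    ∑ i, ∑ j, g (u z) i j * fderiv ℝ u z v i * fderiv ℝ u z v j = lam * ‖v‖ ^ 2

theorem ConformalImmersionWrt.weaklyConformalAt {s : Set ℂ} (hu : ConformalImmersionWrt g u s)
    (hz : z ∈ s) : WeaklyConformalAt g u z := by
  obtain ⟨-, φ, hφ⟩ := hu
  refine ⟨exp (φ z), fun v ↦ ?_⟩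
  rw [hφ z hz, Complex.mul_conj, Complex.ofReal_re, Complex.normSq_eq_norm_sq]

theorem WeaklyConformalAt.norm_fderiv_sq_le {m : ℝ} (hu : WeaklyConformalAt g u z) (hm : 0 ≤ m)
    (hm₁ : m ≤ 1 / 2)
    (hg : ∀ a : EuclideanSpace ℝ (Fin n),
      |∑ i, ∑ j, g (u z) i j * a i * a j - ‖a‖ ^ 2| ≤ m * ‖a‖ ^ 2) (v : ℂ) :
    ‖fderiv ℝ u z v‖ ^ 2 ≤ (1 + 4 * m) / 2 * energyDensity u z * ‖v‖ ^ 2 := by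
  obtain ⟨lam, hlam⟩ := hu
  have hg' (w : ℂ) : |lam * ‖w‖ ^ 2 - ‖fderiv ℝ u z w‖ ^ 2| ≤ m * ‖fderiv ℝ u z w‖ ^ 2 := by
    simpa only [hlam] using hg (fderiv ℝ u z w)
  have hlam_le : 2 * lam ≤ (1 + m) * energyDensity u z := by
    have h₁ := (abs_le.1 (hg' 1)).2
    have hI := (abs_le.1 (hg' Complex.I)).2
    rw [norm_one] at h₁
    rw [Complex.norm_I] at hI
    rw [energyDensity]
    linarith
  have hE := energyDensity_nonneg u z
  have hm₂ : 1 + m ≤ (1 - m) * (1 + 4 * m) := by nlinarith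
  refine le_of_mul_le_mul_left ?_ (show 0 < 1 - m by linarith)
  calc (1 - m) * ‖fderiv ℝ u z v‖ ^ 2 ≤ lam * ‖v‖ ^ 2 := by linarith [(abs_le.1 (hg' v)).1]
    _ ≤ (1 + m) / 2 * energyDensity u z * ‖v‖ ^ 2 := by
      gcongr
      linarith
    _ ≤ (1 - m) * (1 + 4 * m) / 2 * energyDensity u z * ‖v‖ ^ 2 := by gcongr
    _ = (1 - m) * ((1 + 4 * m) / 2 * energyDensity u z * ‖v‖ ^ 2) := by ring

end Metric

section Limit

open MeasureTheory Filter

theorem ofReal_sub_le_liminf_ofReal_sub {F : ℕ → ℝ} {G H : ℝ}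
    (hlim : ∀ b > G, ∀ᶠ j in atTop, F j ≤ b) :
    ENNReal.ofReal (H - G) ≤ liminf (fun j ↦ ENNReal.ofReal (H - F j)) atTop := by
  refine le_of_forall_lt fun a ha ↦ ?_
  obtain ⟨b, hab, hb⟩ := exists_between ha
  refine hab.trans_le (le_liminf_of_le (by isBoundedDefault) ?_)
  have hb_top := hb.ne_top
  rw [ENNReal.lt_ofReal_iff_toReal_lt hb_top] at hb
  filter_upwards [hlim (H - b.toReal) (by linarith)] with j hj
  exact (ENNReal.le_ofReal_iff_toReal_le hb_top (by linarith [b.toReal_nonneg])).2 (by linarith)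

theorem integrable_and_le_integral_of_eventually_le {α : Type*} [MeasurableSpace α]
    {μ : Measure α} {F : ℕ → α → ℝ} {G H : α → ℝ} {c : ℝ} (hH : Integrable H μ)
    (hF : ∀ j, Integrable (F j) μ) (hFH : ∀ j, F j ≤ᵐ[μ] H) (hG : AEStronglyMeasurable G μ)
    (hGH : G ≤ᵐ[μ] H) (hlim : ∀ᵐ x ∂μ, ∀ b > G x, ∀ᶠ j in atTop, F j x ≤ b)
    (hc : ∀ j, c ≤ ∫ x, F j x ∂μ) : Integrable G μ ∧ c ≤ ∫ x, G x ∂μ := by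
  have hF_lintegral (j : ℕ) :
      ∫⁻ x, ENNReal.ofReal (H x - F j x) ∂μ ≤ ENNReal.ofReal (∫ x, H x ∂μ - c) := by
    rw [← ofReal_integral_eq_lintegral_ofReal (f := fun x ↦ H x - F j x) (hH.sub (hF j))
      ((hFH j).mono fun x hx ↦ sub_nonneg.2 hx), integral_sub hH (hF j)]
    gcongr
    exact hc j
  have hG_lintegral :
      ∫⁻ x, ENNReal.ofReal (H x - G x) ∂μ ≤ ENNReal.ofReal (∫ x, H x ∂μ - c) :=
    calc ∫⁻ x, ENNReal.ofReal (H x - G x) ∂μ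
        ≤ ∫⁻ x, liminf (fun j ↦ ENNReal.ofReal (H x - F j x)) atTop ∂μ :=
          lintegral_mono_ae (hlim.mono fun x hx ↦ ofReal_sub_le_liminf_ofReal_sub hx)
      _ ≤ liminf (fun j ↦ ∫⁻ x, ENNReal.ofReal (H x - F j x) ∂μ) atTop :=
          lintegral_liminf_le' fun j ↦ (hH.sub (hF j)).aemeasurable.ennreal_ofReal
      _ ≤ liminf (fun _ ↦ ENNReal.ofReal (∫ x, H x ∂μ - c)) atTop :=
          liminf_le_liminf (.of_forall hF_lintegral)
      _ = ENNReal.ofReal (∫ x, H x ∂μ - c) := liminf_const _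
  have hnonneg : 0 ≤ᵐ[μ] fun x ↦ H x - G x := hGH.mono fun x hx ↦ sub_nonneg.2 hx
  have hHG : Integrable (H - G) μ :=
    ⟨hH.aestronglyMeasurable.sub hG, (hasFiniteIntegral_iff_ofReal hnonneg).2
      (hG_lintegral.trans_lt ENNReal.ofReal_lt_top)⟩
  have hGint : Integrable G μ := by simpa using hH.sub hHG
  have hcH : c ≤ ∫ x, H x ∂μ := (hc 0).trans (integral_mono_ae (hF 0) hH (hFH 0))
  rw [← ofReal_integral_eq_lintegral_ofReal (f := fun x ↦ H x - G x) hHG hnonneg,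
    ENNReal.ofReal_le_ofReal_iff (sub_nonneg.2 hcH), integral_sub hH hGint] at hG_lintegral
  exact ⟨hGint, by linarith⟩

theorem profile_norm_sq {V : Type*} [SeminormedAddCommGroup V] (A : ℝ) (x : V) :
    profile A (‖x‖ ^ 2) = log ‖x‖ + A * ‖x‖ := by
  rw [profile, log_pow, sqrt_sq (norm_nonneg x)]
  ring

theorem monotoneOn_profile {A : ℝ} (hA : 0 ≤ A) : MonotoneOn (profile A) (Ioi 0) := by
  intro s hs t _ hst
  have := log_le_log hs hst
  unfold profile
  gcongr

theorem profile_le_profile {A t T : ℝ} (hA : 0 ≤ A) (ht : 0 ≤ t) (htT : t ≤ T) (hT : 1 ≤ T) :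
    profile A t ≤ profile A T := by
  obtain rfl | ht := ht.eq_or_lt
  · have := log_nonneg hT
    simp only [profile, log_zero, sqrt_zero, zero_div, mul_zero, add_zero]
    positivity
  · exact monotoneOn_profile hA ht (ht.trans_le htT) htT

-- At `t = 0` the convention `log 0 = 0` gives `profile A 0 = 0`, above the true limit `-∞`.
theorem eventually_profile_add_le {A t b : ℝ} (ht : 0 ≤ t) (hb : profile A t < b) :
    ∀ᶠ s in 𝓝[>] 0, profile A (t + s) ≤ b := by
  obtain rfl | ht := ht.eq_or_lt
  · have hsqrt : Tendsto (fun s ↦ A * √s) (𝓝[>] 0) (𝓝 (A * √0)) :=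
      (by fun_prop : Continuous fun s ↦ A * √s).continuousWithinAt
    simpa [profile] using
      ((tendsto_log_nhdsGT_zero.atBot_div_const two_pos).atBot_add hsqrt).eventually_le_atBot b
  · have hcont : ContinuousAt (fun s ↦ profile A (t + s)) 0 :=
      ContinuousAt.comp' (g := profile A)
        (by simpa using (hasDerivAt_profile A ht).continuousAt) (by fun_prop)
    exact ((hcont.eventually_lt_const (by simpa using hb)).filter_mono nhdsWithin_le_nhds).mono
      fun _ ↦ le_of_lt

theorem circleIntegrable_and_le_circleAverage_of_eventually_le {F : ℕ → ℂ → ℝ} {G H : ℂ → ℝ}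
    {c r : ℝ} {z : ℂ} (hH : CircleIntegrable H z r) (hF : ∀ j, CircleIntegrable (F j) z r)
    (hFH : ∀ j, ∀ w ∈ sphere z |r|, F j w ≤ H w) (hG : Measurable fun θ ↦ G (circleMap z r θ))
    (hGH : ∀ w ∈ sphere z |r|, G w ≤ H w)
    (hlim : ∀ w ∈ sphere z |r|, ∀ b > G w, ∀ᶠ j in atTop, F j w ≤ b)
    (hc : ∀ j, c ≤ circleAverage (F j) z r) :
    CircleIntegrable G z r ∧ c ≤ circleAverage G z r := by
  have hmem := circleMap_mem_sphere' z r
  simp only [CircleIntegrable, intervalIntegrable_iff_integrableOn_Ioc_of_le two_pi_pos.le,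
    circleAverage_def, smul_eq_mul, le_inv_mul_iff₀ two_pi_pos,
    intervalIntegral.integral_of_le two_pi_pos.le] at hH hF hc ⊢
  exact integrable_and_le_integral_of_eventually_le hH hF
    (fun j ↦ .of_forall fun θ ↦ hFH j _ (hmem θ)) hG.aestronglyMeasurable
    (.of_forall fun θ ↦ hGH _ (hmem θ)) (.of_forall fun θ ↦ hlim _ (hmem θ)) hc

theorem circleIntegrable_and_le_circleAverage_of_profile {V : Type*} [SeminormedAddCommGroup V]
    {u : ℂ → V} {A c r s₀ : ℝ} {z : ℂ} (hA : 0 ≤ A) (hu : ContinuousOn u (sphere z |r|))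
    (hs₀ : 0 < s₀)
    (hc : ∀ s ∈ Ioo 0 s₀, c ≤ circleAverage (fun w ↦ profile A (‖u w‖ ^ 2 + s)) z r) :
    CircleIntegrable (fun w ↦ log ‖u w‖ + A * ‖u w‖) z r ∧
      c ≤ circleAverage (fun w ↦ log ‖u w‖ + A * ‖u w‖) z r := by
  simp only [← profile_norm_sq]
  obtain ⟨C, hC⟩ := (isCompact_sphere z |r|).exists_bound_of_continuousOn hu
  obtain ⟨σ, -, hσ, hσ_lim⟩ := exists_seq_strictAnti_tendsto' hs₀
  have hσ_lim' : Tendsto σ atTop (𝓝[>] 0) :=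
    tendsto_nhdsWithin_iff.2 ⟨hσ_lim, .of_forall fun j ↦ (hσ j).1⟩
  have hle {s : ℝ} (hs : s ∈ Ico 0 s₀) {w : ℂ} (hw : w ∈ sphere z |r|) :
      profile A (‖u w‖ ^ 2 + s) ≤ profile A (C ^ 2 + s₀ + 1) := by
    have := pow_le_pow_left₀ (norm_nonneg _) (hC w hw) 2
    exact profile_le_profile hA (add_nonneg (by positivity) hs.1) (by linarith [hs.2])
      (by nlinarith)
  have hcont (j : ℕ) : ContinuousOn (fun w ↦ profile A (‖u w‖ ^ 2 + σ j)) (sphere z |r|) :=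
    fun w hw ↦ ContinuousAt.comp_continuousWithinAt (g := profile A) (x := w)
      (hasDerivAt_profile A (add_pos_of_nonneg_of_pos (by positivity) (hσ j).1)).continuousAt
      (((hu.norm.pow 2).add continuousOn_const) w hw)
  have hmeas : Measurable fun θ ↦ profile A (‖u (circleMap z r θ)‖ ^ 2) := by
    have hv : Measurable fun θ ↦ ‖u (circleMap z r θ)‖ ^ 2 := ((hu.comp_continuous
      (continuous_circleMap z r) (circleMap_mem_sphere' z r)).norm.pow 2).measurable
    exact (hv.log.div_const 2).add (hv.sqrt.const_mul A)
  exact circleIntegrable_and_le_circleAverage_of_eventually_le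
    (circleIntegrable_const (profile A (C ^ 2 + s₀ + 1)) z r)
    (fun j ↦ (hcont j).circleIntegrable') (fun j w ↦ hle (Ioo_subset_Ico_self (hσ j))) hmeas
    (fun w hw ↦ by simpa using hle (left_mem_Ico.2 hs₀) hw)
    (fun w _ b hb ↦ hσ_lim'.eventually (eventually_profile_add_le (by positivity) hb))
    (fun j ↦ hc _ (hσ j))

end Limit

section MPSH

variable {g : EuclideanSpace ℝ (Fin n) → Matrix (Fin n) (Fin n) ℝ} {A : ℝ}

theorem exists_ball_laplacian_profile_nonneg (hg : ∀ i j, ContDiffAt ℝ 1 (fun x ↦ g x i j) 0)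
    (hg₀ : g 0 = 1) (hg₁ : ∀ i j, fderiv ℝ (fun x ↦ g x i j) 0 = 0) (hA : 0 < A) :
    ∃ δ > 0, ∀ (U : Set ℂ) (u : ℂ → EuclideanSpace ℝ (Fin n)), HarmonicWrt g u U →
      ∀ z ∈ U, ContDiffAt ℝ 2 u z → u z ∈ ball 0 δ → WeaklyConformalAt g u z →
        ∀ s ∈ Ioo 0 (1 / 2 : ℝ), 0 ≤ Δ (fun w ↦ profile A (‖u w‖ ^ 2 + s)) z := by
  set c := A / (4 + 3 * A)
  set η := c / (n ^ 3 + 1) with hη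
  have hc_pos : 0 < c := by positivity
  have hcA : c * (4 + 3 * A) = A := div_mul_cancel₀ _ (by positivity)
  have hc_le : c ≤ 1 := (div_le_one (by positivity)).2 (by linarith)
  have hηc : n ^ 3 * η ≤ c := by
    rw [hη, ← mul_div_assoc, div_le_iff₀ (by positivity)]
    linarith
  obtain ⟨δ, hδ, hball⟩ := Metric.eventually_nhds_iff_ball.1
    ((eventually_abs_sum_sub_norm_sq_le (fun i j ↦ (hg i j).differentiableAt one_ne_zero) hg₀ hg₁
      (c := c / 4) (by positivity)).and
      (eventually_abs_christoffel_le hg hg₀ hg₁ (η := η) (by positivity)))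
  refine ⟨min δ (1 / 2), by positivity, fun U u hharm z hz hu huδ hconf s hs ↦ ?_⟩
  obtain ⟨hmetric, hchristoffel⟩ := hball (u z) (ball_subset_ball (min_le_left _ _) huδ)
  have hnorm : ‖u z‖ ≤ 1 / 2 := (mem_ball_zero_iff.1 huδ).le.trans (min_le_right _ _)
  refine laplacian_profile_nonneg hA hc_pos.le hcA.le hs.1 hu
    (by nlinarith [norm_nonneg (u z), hs.2]) (fun v ↦ ?_) ?_
  · convert hconf.norm_fderiv_sq_le (by positivity) (by nlinarith [norm_nonneg (u z)]) hmetric v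
      using 4
    ring
  · refine (norm_laplacian_le_of_harmonicWrt hharm hz hu hchristoffel).trans ?_
    have : 0 ≤ energyDensity u z := energyDensity_nonneg u z
    gcongr

theorem contDiffOn_profile_norm_sq_add_const {V : Type*} [NormedAddCommGroup V]
    [InnerProductSpace ℝ V] {u : ℂ → V} {U : Set ℂ} (hu : ContDiffOn ℝ 2 u U) {s : ℝ}
    (hs : 0 < s) : ContDiffOn ℝ 2 (fun w ↦ profile A (‖u w‖ ^ 2 + s)) U := fun w hw ↦
  (contDiffAt_profile A (by positivity)).comp_contDiffWithinAt w
    (((hu w hw).norm_sq ℝ).add contDiffWithinAt_const)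

theorem log_plus_A_norm_is_MPSH_general (hg : ∀ i j, ContDiffAt ℝ 1 (fun x ↦ g x i j) 0)
    (hg₀ : g 0 = 1) (hg₁ : ∀ i j, fderiv ℝ (fun x ↦ g x i j) 0 = 0) (hA : 0 < A) :
    ∃ δ > 0, ∀ (U : Set ℂ) (u : ℂ → EuclideanSpace ℝ (Fin n)), IsOpen U →
      ContDiffOn ℝ 2 u U → MapsTo u U (ball 0 δ) → (∀ z ∈ U, WeaklyConformalAt g u z) →
      HarmonicWrt g u U → ∀ z r, 0 ≤ r → closedBall z r ⊆ U → u z ≠ 0 →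
        CircleIntegrable (fun w ↦ log ‖u w‖ + A * ‖u w‖) z r ∧
          log ‖u z‖ + A * ‖u z‖ ≤ circleAverage (fun w ↦ log ‖u w‖ + A * ‖u w‖) z r := by
  obtain ⟨δ, hδ, hΔ⟩ := exists_ball_laplacian_profile_nonneg hg hg₀ hg₁ hA
  refine ⟨δ, hδ, fun U u hU hu hmaps hconf hharm z r hr hzr huz ↦ ?_⟩
  have hsphere : sphere z |r| ⊆ U := by
    rw [abs_of_nonneg hr]
    exact sphere_subset_closedBall.trans hzr
  refine circleIntegrable_and_le_circleAverage_of_profile hA.le (hu.continuousOn.mono hsphere)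
    one_half_pos fun s hs ↦ ?_
  have huz' : 0 < ‖u z‖ ^ 2 := by positivity
  calc log ‖u z‖ + A * ‖u z‖ = profile A (‖u z‖ ^ 2) := (profile_norm_sq A (u z)).symm
    _ ≤ profile A (‖u z‖ ^ 2 + s) :=
      monotoneOn_profile hA.le huz' (add_pos huz' hs.1) (le_add_of_nonneg_right hs.1.le)
    _ ≤ circleAverage (fun w ↦ profile A (‖u w‖ ^ 2 + s)) z r := by
      refine le_circleAverage_of_laplacian_nonneg hU
        (contDiffOn_profile_norm_sq_add_const hu hs.1) hr hzr fun w hw ↦ ?_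
      have hwU := hzr (ball_subset_closedBall hw)
      exact hΔ U u hharm w hwU (hu.contDiffAt (hU.mem_nhds hwU)) (hmaps hwU) (hconf w hwU) s hs

end MPSH

/-- Let `g` be a smooth Riemannian metric on a coordinate ball
`B(0,ρ) ⊂ ℝⁿ` in normal coordinates at `p = 0` (`g(0) = δ`, `dg(0) = 0`).
Then for `A > 0` sufficiently large the function `φ(x) = log|x| + A|x|` is
minimal plurisubharmonic near the origin: its composition with every smooth
conformal harmonic immersion `u : 𝔻 → B(0,δ)` satisfies the sub-mean value
inequality on `𝔻`. -/
theorem log_plus_A_norm_is_MPSH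
    (g : EuclideanSpace ℝ (Fin n) → Matrix (Fin n) (Fin n) ℝ)
    (ρ : ℝ) (hρ : 0 < ρ)
    (hsmooth : ∀ i j, ContDiffOn ℝ (⊤ : ℕ∞) (fun x => g x i j) (ball 0 ρ))
    (hsym : ∀ x ∈ ball (0 : EuclideanSpace ℝ (Fin n)) ρ, (g x).IsSymm)
    (hposdef : ∀ x ∈ ball (0 : EuclideanSpace ℝ (Fin n)) ρ,
      ∀ v : EuclideanSpace ℝ (Fin n), v ≠ 0 → 0 < ∑ i, ∑ j, g x i j * v i * v j)
    (hnormal0 : g 0 = 1)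
    (hnormal1 : ∀ i j, fderiv ℝ (fun x => g x i j) 0 = 0) :
    ∃ A > (0 : ℝ), ∃ δ > (0 : ℝ), δ ≤ ρ ∧
      ∀ u : ℂ → EuclideanSpace ℝ (Fin n),
        ContDiffOn ℝ (⊤ : ℕ∞) u (ball 0 1) →
        MapsTo u (ball 0 1) (ball (0 : EuclideanSpace ℝ (Fin n)) δ) →
        ConformalImmersionWrt g u (ball 0 1) →
        HarmonicWrt g u (ball 0 1) →
        ∀ z : ℂ, ∀ r : ℝ, 0 < r → closedBall z r ⊆ ball (0 : ℂ) 1 → u z ≠ 0 →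
          Real.log ‖u z‖ + A * ‖u z‖ ≤ (2 * π)⁻¹ *
            ∫ θ in (0:ℝ)..(2 * π),
              (Real.log ‖u (z + r * Complex.exp (θ * Complex.I))‖ +
                A * ‖u (z + r * Complex.exp (θ * Complex.I))‖) := by
  have hg (i j : Fin n) : ContDiffAt ℝ 1 (fun x ↦ g x i j) 0 :=
    ((hsmooth i j).contDiffAt (ball_mem_nhds 0 hρ)).of_le (by simp)
  obtain ⟨δ, hδ, hsub⟩ := log_plus_A_norm_is_MPSH_general hg hnormal0 hnormal1 one_pos
  refine ⟨1, one_pos, min δ ρ, lt_min hδ hρ, min_le_right δ ρ,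
    fun u hu hmaps hconf hharm z r hr hzr huz ↦ ?_⟩
  exact (hsub (ball 0 1) u isOpen_ball (hu.of_le (WithTop.coe_le_coe.2 (le_top : (2 : ℕ∞) ≤ ⊤)))
    (hmaps.mono_right (ball_subset_ball (min_le_left δ ρ))) (fun w hw ↦ hconf.weaklyConformalAt hw)
    hharm z r hr.le hzr huz).2

end
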